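/- arXiv:1704.07654 — 2 statements merged into one kernel-verified Lean document; each statement's English description precedes it below -/
import Mathlib

section
/- Let X be an irreducible, Jacobson, catenary, locally Noetherian scheme of finite dimension. Then dim U = dim X for every non-empty open subset U of X; equivalently, the local dimension function x ↦ dim_x X is constant on X. -/
open AlgebraicGeometry TopologicalSpace Order
open TopologicalSpace Order

/-- The local dimension of a topological space at a point: the infimum over open
neighbourhoods `U` of `x` of the Krull dimension of `U`. -/
noncomputable def localDim (X : Type*) [TopologicalSpace X] (x : X) : WithBot ℕ∞ :=
  ⨅ U : {U : Set X // IsOpen U ∧ x ∈ U}, topologicalKrullDim ↥U.1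
/-- A chain of irreducible closed subsets is saturated (maximal with given endpoints)
if each step is a covering relation. -/
def IsSaturatedChain {X : Type*} [TopologicalSpace X]
    (p : LTSeries (IrreducibleCloseds X)) : Prop :=
  ∀ i : Fin p.length, p.toFun i.castSucc ⋖ p.toFun i.succ

/-- A topological space is catenary if any two saturated chains of irreducible closed
subsets with the same endpoints have the same length. -/
def IsCatenarySpace (X : Type*) [TopologicalSpace X] : Prop :=
  ∀ p q : LTSeries (IrreducibleCloseds X), p.head = q.head → p.last = q.last →
    IsSaturatedChain p → IsSaturatedChain q → p.length = q.length

/-- A maximal chain of irreducible closed subsets: saturated, starting at a minimal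
irreducible closed subset and ending at a maximal one. -/
def IsMaximalChain {X : Type*} [TopologicalSpace X]
    (p : LTSeries (IrreducibleCloseds X)) : Prop :=
  IsSaturatedChain p ∧ IsMin p.head ∧ IsMax p.last

/-- The codimension `codim(Y, Z)`: the supremum of lengths of chains of irreducible
closed subsets from `Y` to `Z`. -/
noncomputable def relCodim {X : Type*} [TopologicalSpace X]
    (Y Z : IrreducibleCloseds X) : ℕ∞ :=
  ⨆ p : {p : LTSeries (IrreducibleCloseds X) // p.head = Y ∧ p.last = Z},
    (p.1.length : ℕ∞)

/-- The dimension of the irreducible closed subset `Y`: the supremum of lengths of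
chains of irreducible closed subsets contained in `Y`. -/
noncomputable def chainDim {X : Type*} [TopologicalSpace X]
    (Y : IrreducibleCloseds X) : ℕ∞ :=
  ⨆ p : {p : LTSeries (IrreducibleCloseds X) // p.last ≤ Y}, (p.1.length : ℕ∞)

/-- The dimension of `X`: the supremum of lengths of chains of irreducible closed
subsets of `X`. -/
noncomputable def spaceDim (X : Type*) [TopologicalSpace X] : ℕ∞ :=
  ⨆ p : LTSeries (IrreducibleCloseds X), (p.length : ℕ∞)

/-- The codimension of `Y` in the ambient space: the supremum of lengths of chains of
irreducible closed subsets starting at `Y`. -/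
noncomputable def codimAbove {X : Type*} [TopologicalSpace X]
    (Y : IrreducibleCloseds X) : ℕ∞ :=
  ⨆ p : {p : LTSeries (IrreducibleCloseds X) // p.head = Y}, (p.1.length : ℕ∞)

/-- A topological space is equicodimensional if all minimal irreducible closed subsets
have the same codimension. -/
def IsEquicodim (X : Type*) [TopologicalSpace X] : Prop :=
  ∀ Y Y' : IrreducibleCloseds X, IsMin Y → IsMin Y' → codimAbove Y = codimAbove Y'

/-!
Let `U` be open and dense. If `p < r < s` are primes of a Noetherian ring with `p` in a given open
subset, then Krull's height theorem and prime avoidance give a prime in that open subset strictly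
between `p` and `s`. Start a chain of primes at a minimal prime, which lies in the dense set `U`;
replacing its members one by one from the bottom up moves all of it except its top into `U`. The
resulting chain ends at a non-closed point `y` of `U` and is one step shorter than the original. In
a Jacobson space `y` specializes to a closed point lying in `U`, which makes up for the lost step.
-/

theorem exists_mem_minimalPrimes_sup_span_singleton_le {R : Type*} [CommRing R]
    {p s : PrimeSpectrum R} (hps : p ≤ s) {x : R} (hx : x ∈ s.asIdeal) :
    ∃ q ≤ s, x ∈ q.asIdeal ∧ q.asIdeal ∈ (p.asIdeal ⊔ Ideal.span {x}).minimalPrimes := by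
  obtain ⟨q, hq, hqs⟩ := Ideal.exists_minimalPrimes_le
    (sup_le hps ((Ideal.span_singleton_le_iff_mem _).2 hx))
  exact ⟨⟨q, hq.1.1⟩, hqs, hq.1.2 (Ideal.mem_sup_right (Ideal.mem_span_singleton_self x)), hq⟩

section Noetherian

variable {R : Type*} [CommRing R] [IsNoetherianRing R]

theorem wcovBy_of_mem_minimalPrimes_sup_span_singleton {p q : PrimeSpectrum R} {x : R}
    (hq : q.asIdeal ∈ (p.asIdeal ⊔ Ideal.span {x}).minimalPrimes) : p ⩿ q := by
  have hxq : x ∈ q.asIdeal := hq.1.2 (Ideal.mem_sup_right (Ideal.mem_span_singleton_self x))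
  refine ⟨le_sup_left.trans hq.1.2, fun a hpa haq ↦ ?_⟩
  obtain ⟨b, hxb, hpb, hbq⟩ := PrimeSpectrum.exist_mem_one_of_mem_two hpa haq hxq
  have hb : p.asIdeal ⊔ Ideal.span {x} ≤ b.asIdeal :=
    sup_le hpb.le ((Ideal.span_singleton_le_iff_mem _).2 hxb)
  exact hbq.not_ge (hq.2 ⟨b.2, hb⟩ hbq.le)

theorem exists_mem_notMem_minimalPrimes_sup_span_singleton {p r s : PrimeSpectrum R} (hpr : p < r)
    (hrs : r < s) (f : R) : ∃ x ∈ s.asIdeal, x ∉ p.asIdeal ∧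
      ∀ I ∈ (p.asIdeal ⊔ Ideal.span {f}).minimalPrimes, x ∉ I := by
  let T : Set (Ideal R) := insert p.asIdeal (p.asIdeal ⊔ Ideal.span {f}).minimalPrimes
  have hT : T.Finite := (Ideal.finite_minimalPrimes_of_isNoetherianRing R _).insert _
  have hprime : ∀ I ∈ T, I.IsPrime := by
    rintro I (rfl | hI)
    exacts [p.2, hI.1.1]
  have hs : ¬ (s.asIdeal : Set R) ⊆ ⋃ I ∈ T, I := by
    intro hsT
    obtain ⟨I, rfl | hI, hsI⟩ :=
      (Ideal.subset_union_prime_finite (f := id) hT ⊤ ⊤ fun I hI _ _ ↦ hprime I hI).1 hsT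
    · exact (hpr.trans hrs).not_ge hsI
    · exact (wcovBy_of_mem_minimalPrimes_sup_span_singleton (q := ⟨I, hI.1.1⟩) hI).2 hpr
        (hrs.trans_le hsI)
  obtain ⟨x, hxs, hxT⟩ := Set.not_subset.1 hs
  simp only [Set.mem_iUnion, not_exists] at hxT
  exact ⟨x, hxs, hxT _ (Set.mem_insert _ _), fun I hI ↦ hxT I (Set.mem_insert_of_mem _ hI)⟩

theorem exists_prime_between_notMem {p r s : PrimeSpectrum R} (hpr : p < r) (hrs : r < s) {f : R}
    (hf : f ∉ p.asIdeal) : ∃ q, p < q ∧ q < s ∧ f ∉ q.asIdeal := by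
  -- If a minimal prime `q` of `p + (x)` contained `f`, a minimal prime of `p + (f)` would lie
  -- strictly between `p` and `q`.
  obtain ⟨x, hxs, hxp, hx⟩ := exists_mem_notMem_minimalPrimes_sup_span_singleton hpr hrs f
  obtain ⟨q, hqs, hxq, hq⟩ :=
    exists_mem_minimalPrimes_sup_span_singleton_le (hpr.trans hrs).le hxs
  have hpq : p ⩿ q := wcovBy_of_mem_minimalPrimes_sup_span_singleton hq
  refine ⟨q, hpq.le.lt_of_ne ?_, hqs.lt_of_ne ?_, fun hfq ↦ ?_⟩
  · rintro rfl
    exact hxp hxq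
  · rintro rfl
    exact hpq.2 hpr hrs
  · obtain ⟨a, haq, hfa, ha⟩ := exists_mem_minimalPrimes_sup_span_singleton_le hpq.le hfq
    have hpa : p < a := (wcovBy_of_mem_minimalPrimes_sup_span_singleton ha).le.lt_of_ne <| by
      rintro rfl
      exact hf hfa
    have haq' : a < q := haq.lt_of_ne <| by
      rintro rfl
      exact hx _ ha hxq
    exact hpq.2 hpa haq'

theorem exists_prime_between_mem_of_isOpen {W : Set (PrimeSpectrum R)} (hW : IsOpen W)
    {p r s : PrimeSpectrum R} (hp : p ∈ W) (hpr : p < r) (hrs : r < s) :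
    ∃ q ∈ W, p < q ∧ q < s := by
  obtain ⟨_, ⟨f, rfl⟩, hpf, hfW⟩ :=
    PrimeSpectrum.isTopologicalBasis_basic_opens.exists_subset_of_mem_open hp hW
  obtain ⟨q, hpq, hqs, hfq⟩ := exists_prime_between_notMem hpr hrs hpf
  exact ⟨q, hfW hfq, hpq, hqs⟩

end Noetherian

theorem mem_of_isGenericPoint_of_isOpen_of_dense {X : Type*} [TopologicalSpace X]
    [NoetherianSpace X] {W : Set X} (hW : IsOpen W) (hW' : Dense W) {x : X} {Z : Set X}
    (hZ : Z ∈ irreducibleComponents X) (hx : IsGenericPoint x Z) : x ∈ W := by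
  obtain ⟨V, hV, hVne, hVZ⟩ :=
    NoetherianSpace.exists_isOpen_nonempty_subset_irreducibleComponent Z hZ
  obtain ⟨w, hwV, hwW⟩ := hW'.inter_open_nonempty V hV hVne
  exact (hx.specializes (hVZ hwV)).mem_open hW hwW

theorem mem_of_isMin_of_isOpen_of_dense {R : Type*} [CommRing R] [IsNoetherianRing R]
    {W : Set (PrimeSpectrum R)} (hW : IsOpen W) (hW' : Dense W) {p : PrimeSpectrum R}
    (hp : IsMin p) : p ∈ W := by
  refine mem_of_isGenericPoint_of_isOpen_of_dense hW hW' ?_ isGenericPoint_closure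
  rw [PrimeSpectrum.closure_singleton, PrimeSpectrum.zeroLocus_ideal_mem_irreducibleComponents,
    p.2.radical]
  exact PrimeSpectrum.isMin_iff.1 hp

theorem exists_lt_of_natCast_lt_height {α : Type*} [Preorder α] {a : α} {n : ℕ}
    (h : (n : ℕ∞) < height a) : ∃ b < a, (n : ℕ∞) ≤ height b := by
  by_contra! H
  exact h.not_ge (height_le_coe_iff.2 H)

theorem exists_prime_lt_mem_le_height_of_lt_height {R : Type*} [CommRing R] [IsNoetherianRing R]
    {W : Set (PrimeSpectrum R)} (hW : IsOpen W) (hW' : Dense W) {n : ℕ} {s : PrimeSpectrum R}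
    (hs : (n : ℕ∞) < height s) : ∃ q < s, q ∈ W ∧ (n : ℕ∞) ≤ height q := by
  induction n generalizing s with
  | zero =>
    obtain ⟨r, hrs, -⟩ := exists_lt_of_natCast_lt_height hs
    obtain ⟨p, hp, hpr⟩ := Ideal.exists_minimalPrimes_le (bot_le : ⊥ ≤ r.asIdeal)
    let η : PrimeSpectrum R := ⟨p, hp.1.1⟩
    have hη : IsMin η := PrimeSpectrum.isMin_iff.2 hp
    exact ⟨η, lt_of_le_of_lt hpr hrs, mem_of_isMin_of_isOpen_of_dense hW hW' hη, by simp⟩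
  | succ n ih =>
    obtain ⟨r, hrs, hr⟩ := exists_lt_of_natCast_lt_height hs
    obtain ⟨p, hpr, hpW, hp⟩ := ih ((Nat.cast_lt.2 n.lt_succ_self).trans_le hr)
    obtain ⟨q, hqW, hpq, hqs⟩ := exists_prime_between_mem_of_isOpen hW hpW hpr hrs
    refine ⟨q, hqs, hqW, ?_⟩
    calc ((n + 1 : ℕ) : ℕ∞) ≤ height p + 1 := by push_cast; gcongr
      _ ≤ height q := height_add_one_le hpq

section Scheme

-- On the points of a scheme `x ≤ y` means `y ⤳ x`, the reverse of the order on `PrimeSpectrum R`;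
-- hence `coheight x` is the codimension of the closure of `x`.

theorem topologicalKrullDim_eq_krullDim (X : Scheme) : topologicalKrullDim X = krullDim X :=
  krullDim_eq_of_orderIso (irreducibleSetEquivPoints (α := X))

variable {X : Scheme}

theorem coheight_eq_height_of_isOpenImmersion {R : CommRingCat} (f : Spec R ⟶ X)
    [IsOpenImmersion f] (p : PrimeSpectrum R) : coheight (f p) = height p :=
  calc coheight (f p) = coheight (α := Spec R) p := coheight_eq_of_isOpenImmersion f
    _ = p.asIdeal.height := (idealHeight_eq_coheight R p).symm
    _ = height p := PrimeSpectrum.height_eq_orderHeight p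

theorem map_lt_map_iff_of_isOpenImmersion {R : CommRingCat} (f : Spec R ⟶ X) [IsOpenImmersion f]
    {p q : PrimeSpectrum R} : f q < f p ↔ p < q := by
  have le_iff (a b : PrimeSpectrum R) : f b ≤ f a ↔ a ≤ b :=
    f.isOpenEmbedding.isInducing.specializes_iff.trans (PrimeSpectrum.le_iff_specializes a b).symm
  simp only [lt_iff_le_not_ge, le_iff]

theorem exists_gt_mem_le_coheight_of_lt_coheight [IsLocallyNoetherian X] {U : Set X}
    (hU : IsOpen U) (hU' : Dense U) {n : ℕ} {x : X} (hx : (n : ℕ∞) < coheight x) :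
    ∃ y > x, y ∈ U ∧ (n : ℕ∞) ≤ coheight y := by
  obtain ⟨R, f, _, ⟨s, rfl⟩, -⟩ :=
    Scheme.exists_affine_mem_range_and_range_subset (Opens.mem_top x)
  have : IsNoetherianRing R :=
    isLocallyNoetherian_Spec.1 (isLocallyNoetherian_of_isOpenImmersion f)
  obtain ⟨q, hqs, hqU, hq⟩ := exists_prime_lt_mem_le_height_of_lt_height
    (hU.preimage f.continuous) (hU'.preimage f.isOpenEmbedding.isOpenMap)
    (hx.trans_eq (coheight_eq_height_of_isOpenImmersion f s))
  exact ⟨f q, (map_lt_map_iff_of_isOpenImmersion f).2 hqs, hqU,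
    hq.trans_eq (coheight_eq_height_of_isOpenImmersion f q).symm⟩

theorem exists_lt_mem_of_isOpen_of_not_isMin [JacobsonSpace X] {U : Set X} (hU : IsOpen U)
    {y : X} (hyU : y ∈ U) (hy : ¬ IsMin y) : ∃ z < y, z ∈ U := by
  obtain ⟨z, ⟨hyz, hzU⟩, hz⟩ := nonempty_inter_closedPoints
    (Z := closure {y} ∩ U) ⟨y, subset_closure rfl, hyU⟩
    (isClosed_closure.isLocallyClosed.inter hU.isLocallyClosed)
  have hz_min : IsMin z := height_eq_zero.1 (Scheme.height_of_isClosed hz)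
  have hzy : z ≤ y := specializes_iff_mem_closure.2 hyz
  exact ⟨z, hzy.lt_of_not_ge fun hle ↦ hy (hz_min.mono hle), hzU⟩

theorem exists_mem_le_coheight_of_isOpen_of_dense [IsLocallyNoetherian X] [JacobsonSpace X]
    {U : Set X} (hU : IsOpen U) (hU' : Dense U) {n : ℕ} {x : X} (hx : (n : ℕ∞) ≤ coheight x) :
    ∃ z ∈ U, (n : ℕ∞) ≤ coheight z := by
  cases n with
  | zero =>
    have : Nonempty X := ⟨x⟩
    obtain ⟨z, hzU⟩ := hU'.nonempty
    exact ⟨z, hzU, by simp⟩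
  | succ n =>
    obtain ⟨y, hxy, hyU, hy⟩ := exists_gt_mem_le_coheight_of_lt_coheight hU hU'
      ((Nat.cast_lt.2 n.lt_succ_self).trans_le hx)
    obtain ⟨z, hzy, hzU⟩ := exists_lt_mem_of_isOpen_of_not_isMin hU hyU (not_isMin_of_lt hxy)
    refine ⟨z, hzU, ?_⟩
    calc ((n + 1 : ℕ) : ℕ∞) ≤ coheight y + 1 := by push_cast; gcongr
      _ ≤ coheight z := coheight_add_one_le hzy

theorem topologicalKrullDim_eq_of_isOpen_of_dense [IsLocallyNoetherian X] [JacobsonSpace X]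
    {U : Set X} (hU : IsOpen U) (hU' : Dense U) :
    topologicalKrullDim U = topologicalKrullDim X := by
  refine (topologicalKrullDim_subspace_le X U).antisymm ?_
  let V : X.Opens := ⟨U, hU⟩
  change _ ≤ topologicalKrullDim V.toScheme
  rw [topologicalKrullDim_eq_krullDim, topologicalKrullDim_eq_krullDim]
  refine iSup_le fun l ↦ ?_
  obtain ⟨z, hzU, hz⟩ :=
    exists_mem_le_coheight_of_isOpen_of_dense hU hU' (length_le_coheight_head (p := l))
  let w : V.toScheme := ⟨z, hzU⟩
  have hw : coheight w = coheight z := (coheight_eq_of_isOpenImmersion V.ι).symm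
  calc (l.length : WithBot ℕ∞) ≤ (coheight w : WithBot ℕ∞) := by rw [hw]; exact_mod_cast hz
    _ ≤ krullDim V.toScheme := coheight_le_krullDim w

end Scheme

theorem dim_open_eq_dim_of_irreducible_jacobson_catenary_general (X : Scheme)
    [IrreducibleSpace X] [JacobsonSpace X] [IsLocallyNoetherian X] :
    (∀ U : Set X, IsOpen U → U.Nonempty →
      topologicalKrullDim ↥U = topologicalKrullDim X) ∧
    ∀ x : X, localDim X x = topologicalKrullDim X := by
  have dim_open (U : Set X) (hU : IsOpen U) (hU' : U.Nonempty) :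
      topologicalKrullDim U = topologicalKrullDim X :=
    topologicalKrullDim_eq_of_isOpen_of_dense hU (hU.dense hU')
  refine ⟨dim_open, fun x ↦ ?_⟩
  have : Nonempty {U : Set X // IsOpen U ∧ x ∈ U} := ⟨⟨Set.univ, isOpen_univ, trivial⟩⟩
  exact (iInf_congr fun U : {U : Set X // IsOpen U ∧ x ∈ U} ↦
    dim_open U.1 U.2.1 ⟨x, U.2.2⟩).trans iInf_const

theorem dim_open_eq_dim_of_irreducible_jacobson_catenary (X : Scheme)
    [IrreducibleSpace X] (hJ : JacobsonSpace X) (hcat : IsCatenarySpace X)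
    [IsLocallyNoetherian X] (d : ℕ) (hd : topologicalKrullDim X = (d : WithBot ℕ∞)) :
    (∀ U : Set X, IsOpen U → U.Nonempty →
      topologicalKrullDim ↥U = topologicalKrullDim X) ∧
    ∀ x : X, localDim X x = topologicalKrullDim X :=
  dim_open_eq_dim_of_irreducible_jacobson_catenary_general X
end

section
/- Let A be a Noetherian local ring which is a G-ring, with completion Â. Let p be a minimal prime of A and q a minimal prime of Â lying over p. Then the length of the Artinian local ring Â_q equals the length of A_p. -/
/-- The length of a ring as a module over itself, realized as the Krull dimension of
its lattice of ideals (submodules). -/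
noncomputable def ringLength (R : Type*) [CommRing R] : WithBot ℕ∞ :=
  Order.krullDim (Submodule R R)
open IsLocalRing TensorProduct in
/-- A (Noetherian) local ring is regular if its Krull dimension equals the dimension of
its cotangent space (embedding dimension). -/
def IsRegularLocal (A : Type u) [CommRing A] [IsLocalRing A] : Prop :=
  ringKrullDim A =
    (Module.finrank (IsLocalRing.ResidueField A) (IsLocalRing.CotangentSpace A) :
      WithBot ℕ∞)

/-- A commutative ring is regular if all of its localizations at primes are regular
local rings. -/
def IsRegularCommRing (B : Type u) [CommRing B] : Prop :=
  ∀ (P : Ideal B) [P.IsPrime], IsRegularLocal (Localization.AtPrime P)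

/-- A `k`-algebra `B` over a field `k` is geometrically regular if `K ⊗[k] B` is
regular for every finite field extension `K` of `k`. -/
def IsGeometricallyRegular (k B : Type u) [Field k] [CommRing B] [Algebra k B] : Prop :=
  ∀ (K : Type u) [Field K] [Algebra k K], Module.Finite k K →
    IsRegularCommRing (TensorProduct k K B)

/-- The residue field of a commutative ring at a prime ideal. -/
noncomputable abbrev primeResidueField (A : Type u) [CommRing A] (p : Ideal A)
    [p.IsPrime] : Type u :=
  IsLocalRing.ResidueField (Localization.AtPrime p)

/-- A Noetherian local ring is a G-ring if for every prime `p`, the formal fibre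
`Â ⊗_A κ(p)` of the completion `Â` over `p` is geometrically regular over `κ(p)`. -/
def IsGRing (A : Type u) [CommRing A] [IsLocalRing A] : Prop :=
  ∀ (p : Ideal A) [p.IsPrime],
    IsGeometricallyRegular (primeResidueField A p)
      (TensorProduct A (primeResidueField A p)
        (AdicCompletion (IsLocalRing.maximalIdeal A) A))

/-!
Write `B` for the completion of `A`. Under `Spec (κ(p) ⊗ B) ≃ {primes of B over p}` the minimal
prime `q` corresponds to a minimal prime `Q` of the formal fibre, and the local ring of the fibre at
`Q` is `B_q ⧸ p B_q`. It is a regular local ring of dimension zero, hence a field, so `p B_q` is the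
maximal ideal of `B_q`. Flat base change along `A_p → B_q` multiplies lengths by the length of
`B_q ⧸ p B_q`, which is one.

Vanishing of the cotangent dimension of the fibre at `Q` forces the maximal ideal to vanish only in
the Noetherian case. The fibre is Noetherian because `B` is, being a quotient of `A⟦X₁, …, Xₙ⟧` where
`n` elements generate the maximal ideal of `A`.
-/

open IsLocalRing

section NoetherianCompletion

theorem nonempty_algHom_adicCompletion {P S : Type*} [CommRing P] [CommRing S] [Algebra P S]
    {J : Ideal P} {I : Ideal S} [IsAdicComplete I S] (hJI : J.map (algebraMap P S) ≤ I) :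
    Nonempty (AdicCompletion J P →ₐ[P] S) := by
  have hle (n : ℕ) : J ^ n ≤ (I ^ n).comap (Algebra.ofId P S) :=
    (Ideal.pow_right_mono (Ideal.map_le_iff_le_comap.mp hJI) n).trans (Ideal.le_comap_pow _ n)
  refine ⟨IsAdicComplete.liftAlgHom I
    (fun n ↦ (Ideal.quotientMapₐ (I ^ n) (Algebra.ofId P S) (hle n)).comp
      (AdicCompletion.evalₐ J n)) fun {m n} hmn ↦ AlgHom.ext fun x ↦ ?_⟩
  induction x using AdicCompletion.induction_on with
  | h x =>
    simp only [AlgHom.comp_apply, AdicCompletion.evalₐ_mk,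
      ← AdicCompletion.Ideal.mk_eq_mk J hmn x]
    rfl

theorem isNoetherianRing_of_isNoetherianRing_adicCompletion {P S : Type*} [CommRing P]
    [CommRing S] [Algebra P S] {J : Ideal P} (hJ : J.FG) [IsNoetherianRing (AdicCompletion J P)]
    [IsAdicComplete (J.map (algebraMap P S)) S]
    (hsurj : Function.Surjective (algebraMap P (S ⧸ J.map (algebraMap P S)))) :
    IsNoetherianRing S := by
  obtain ⟨F⟩ := nonempty_algHom_adicCompletion (le_refl (J.map (algebraMap P S)))
  have := AdicCompletion.isAdicComplete_self J hJ
  have hmap : (J.map (algebraMap P (AdicCompletion J P))).map F.toRingHom =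
      J.map (algebraMap P S) := by
    rw [Ideal.map_map]
    exact congrArg J.map F.comp_algebraMap
  have : IsHausdorff ((J.map (algebraMap P (AdicCompletion J P))).map F.toRingHom) S := by
    rw [hmap]
    infer_instance
  refine isNoetherianRing_of_surjective _ _ F.toRingHom
    (surjective_of_mk_map_comp_surjective (I := J.map (algebraMap P (AdicCompletion J P))) _ ?_)
  rw [hmap]
  intro y
  obtain ⟨a, rfl⟩ := hsurj y
  exact ⟨algebraMap P _ a, congrArg _ (F.commutes a)⟩

theorem isNoetherianRing_of_isAdicComplete {R S : Type*} [CommRing R] [IsNoetherianRing R]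
    [CommRing S] [Algebra R S] {I : Ideal S} (hI : I.FG) [IsAdicComplete I S]
    (hsurj : Function.Surjective (algebraMap R (S ⧸ I))) : IsNoetherianRing S := by
  obtain ⟨n, v, rfl⟩ := Submodule.fg_iff_exists_fin_generating_family.mp hI
  let := (MvPolynomial.aeval (R := R) v).toAlgebra
  have : IsScalarTower R (MvPolynomial (Fin n) R) S :=
    .of_algebraMap_eq' (MvPolynomial.aeval (R := R) v).comp_algebraMap.symm
  have hmap : (MvPolynomial.idealOfVars (Fin n) R).map (algebraMap _ S) =
      Ideal.span (Set.range v) := by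
    rw [MvPolynomial.idealOfVars, Ideal.map_span, ← Set.range_comp]
    exact congrArg _ (congrArg _ (funext fun i ↦ MvPolynomial.aeval_X v i))
  have : IsAdicComplete ((MvPolynomial.idealOfVars (Fin n) R).map (algebraMap _ S)) S :=
    hmap ▸ ‹IsAdicComplete (Ideal.span (Set.range v)) S›
  have := isNoetherianRing_of_ringEquiv _
    (MvPowerSeries.toAdicCompletionAlgEquiv (Fin n) R).toRingEquiv
  refine isNoetherianRing_of_isNoetherianRing_adicCompletion
    (MvPolynomial.idealOfVars_fg (Fin n) R) (.of_comp (g := algebraMap R _) ?_)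
  rw [hmap, ← RingHom.coe_comp, ← IsScalarTower.algebraMap_eq]
  exact hsurj

theorem isNoetherianRing_adicCompletion {R : Type*} [CommRing R] [IsNoetherianRing R]
    (I : Ideal R) : IsNoetherianRing (AdicCompletion I R) := by
  have hI : I.FG := IsNoetherian.noetherian I
  have := AdicCompletion.isAdicComplete_self I hI
  refine isNoetherianRing_of_isAdicComplete (R := R) (hI.map (algebraMap R _)) fun y ↦ ?_
  obtain ⟨y, rfl⟩ := Ideal.Quotient.mk_surjective y
  obtain ⟨a, ha⟩ := Ideal.Quotient.mk_surjective (AdicCompletion.evalOneₐ I y)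
  refine ⟨a, Ideal.Quotient.eq.mpr ?_⟩
  rw [← AdicCompletion.ker_evalOneₐ_eq_map I hI, RingHom.mem_ker]
  simp [← ha, AdicCompletion.algebraMap_apply]

end NoetherianCompletion

section Regularity

theorem isField_of_isRegularLocalRing_of_ringKrullDim_eq_zero {R : Type*} [CommRing R]
    [IsRegularLocalRing R] (hdim : ringKrullDim R = 0) : IsField R := by
  have h := IsRegularLocalRing.spanFinrank_maximalIdeal (R := R)
  rw [hdim, Nat.cast_eq_zero,
    Submodule.spanFinrank_eq_zero_iff_eq_bot (IsNoetherian.noetherian _)] at h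
  exact isField_iff_maximalIdeal_eq.mpr h

theorem isField_localization_of_isRegularRing_of_mem_minimalPrimes {R : Type*} [CommRing R]
    [IsRegularRing R] {P : Ideal R} [P.IsPrime] (hP : P ∈ minimalPrimes R) :
    IsField (Localization.AtPrime P) := by
  refine isField_of_isRegularLocalRing_of_ringKrullDim_eq_zero ?_
  rw [IsLocalization.AtPrime.ringKrullDim_eq_height P, Ideal.height_eq_zero_iff.mpr hP]
  rfl

theorem IsRegularLocal.isRegularLocalRing {R : Type*} [CommRing R] [IsLocalRing R]
    [IsNoetherianRing R] (h : IsRegularLocal R) : IsRegularLocalRing R :=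
  (IsRegularLocalRing.iff_finrank_cotangentSpace R).mpr h.symm

theorem IsRegularCommRing.isRegularRing {R : Type*} [CommRing R] [IsNoetherianRing R]
    (h : IsRegularCommRing R) : IsRegularRing R :=
  isRegularRing_iff.mpr fun P _ ↦ (h P).isRegularLocalRing

theorem IsGeometricallyRegular.isRegularRing {k B : Type u} [Field k] [CommRing B] [Algebra k B]
    [IsNoetherianRing B] (h : IsGeometricallyRegular k B) : IsRegularRing B := by
  let e := (Algebra.TensorProduct.lid k B).toRingEquiv
  have := isNoetherianRing_of_ringEquiv _ e.symm
  have := (h k inferInstance).isRegularRing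
  exact .of_ringEquiv e

theorem isNoetherianRing_fiber {A : Type*} [CommRing A] (p : Ideal A) [p.IsPrime] (B : Type*)
    [CommRing B] [Algebra A B] [IsNoetherianRing B] : IsNoetherianRing (p.Fiber B) :=
  have : IsNoetherianRing (TensorProduct A B p.ResidueField) :=
    Algebra.EssFiniteType.isNoetherianRing B _
  isNoetherianRing_of_ringEquiv _ (Algebra.TensorProduct.comm A B p.ResidueField).toRingEquiv

theorem IsGRing.isRegularRing_fiber {A : Type u} [CommRing A] [IsLocalRing A] [IsNoetherianRing A]
    (hA : IsGRing A) (p : Ideal A) [p.IsPrime] :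
    IsRegularRing (p.Fiber (AdicCompletion (maximalIdeal A) A)) :=
  have := isNoetherianRing_adicCompletion (maximalIdeal A)
  have := isNoetherianRing_fiber p (AdicCompletion (maximalIdeal A) A)
  IsGeometricallyRegular.isRegularRing (hA p)

end Regularity

section Fiber

variable {A B : Type*} [CommRing A] [CommRing B] [Algebra A B] {p : Ideal A} [p.IsPrime]

theorem exists_mem_minimalPrimes_fiber_comap_eq {q : Ideal B} [q.IsPrime] [q.LiesOver p]
    (hq : q ∈ minimalPrimes B) :
    ∃ Q ∈ minimalPrimes (p.Fiber B),
      Q.comap (Algebra.TensorProduct.includeRight : B →ₐ[A] p.Fiber B) = q := by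
  let e := PrimeSpectrum.primesOverOrderIsoFiber A B p
  let q' : p.primesOver B := ⟨q, ‹_›, ‹_›⟩
  have hq' : IsMin q' := fun P hP ↦ hq.2 ⟨P.2.1, bot_le⟩ hP
  refine ⟨(e q').asIdeal, PrimeSpectrum.isMin_iff.mp ((e.isMin_apply).mpr hq'), ?_⟩
  exact congrArg Subtype.val (e.symm_apply_apply q')

theorem map_eq_maximalIdeal_of_isField_localization_fiber {Q : Ideal (p.Fiber B)} [Q.IsPrime]
    (hQ : IsField (Localization.AtPrime Q)) :
    p.map (algebraMap A (Localization.AtPrime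
      (Q.comap (Algebra.TensorProduct.includeRight : B →ₐ[A] p.Fiber B)))) = maximalIdeal _ := by
  refine eq_maximalIdeal (Ideal.Quotient.maximal_of_isField _ ?_)
  rw [IsScalarTower.algebraMap_eq A B, ← Ideal.map_map]
  exact (Ideal.Fiber.algEquivAux₂ p Q).symm.toMulEquiv.isField hQ

end Fiber

section Length

theorem length_eq_of_map_maximalIdeal_eq {R S : Type*} [CommRing R] [CommRing S] [IsLocalRing R]
    [IsLocalRing S] [Algebra R S] [IsLocalHom (algebraMap R S)] [Module.Flat R S]
    (h : (maximalIdeal R).map (algebraMap R S) = maximalIdeal S) :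
    Module.length S S = Module.length R R := by
  have hone : Module.length S (S ⧸ maximalIdeal S) = 1 :=
    Module.length_eq_one_iff.mpr
      (isSimpleModule_iff_quot_maximal.mpr ⟨_, inferInstance, ⟨.refl _ _⟩⟩)
  calc Module.length S S
      = Module.length S (TensorProduct R S R) :=
        (TensorProduct.AlgebraTensorModule.rid R S S).length_eq.symm
    _ = Module.length R R := by rw [length_baseChange, h, hone, mul_one]

theorem ringLength_eq_coe_length (R : Type*) [CommRing R] : ringLength R = Module.length R R :=
  (Module.coe_length R R).symm

theorem ringLength_localization_eq_of_map_eq_maximalIdeal {A B : Type*} [CommRing A] [CommRing B]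
    [Algebra A B] [Module.Flat A B] (p : Ideal A) [p.IsPrime] (q : Ideal B) [q.IsPrime]
    [q.LiesOver p] (h : p.map (algebraMap A (Localization.AtPrime q)) = maximalIdeal _) :
    ringLength (Localization.AtPrime q) = ringLength (Localization.AtPrime p) := by
  let := Localization.AtPrime.algebraOfLiesOver p q
  rw [ringLength_eq_coe_length, ringLength_eq_coe_length,
    length_eq_of_map_maximalIdeal_eq (R := Localization.AtPrime p)]
  rw [← Localization.AtPrime.map_eq_maximalIdeal, Ideal.map_map, ← IsScalarTower.algebraMap_eq, h]

end Length

theorem length_localization_completion_eq_of_isGRing_general {A B : Type*} [CommRing A]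
    [CommRing B] [Algebra A B] [Module.Flat A B] (p : Ideal A) [p.IsPrime]
    (hfib : ∀ (Q : Ideal (p.Fiber B)) [Q.IsPrime], Q ∈ minimalPrimes (p.Fiber B) →
      IsField (Localization.AtPrime Q))
    (q : Ideal B) [q.IsPrime] [q.LiesOver p] (hq : q ∈ minimalPrimes B) :
    ringLength (Localization.AtPrime q) = ringLength (Localization.AtPrime p) := by
  obtain ⟨Q, hQ, rfl⟩ := exists_mem_minimalPrimes_fiber_comap_eq (p := p) hq
  have : Q.IsPrime := hQ.1.1
  exact ringLength_localization_eq_of_map_eq_maximalIdeal p _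
    (map_eq_maximalIdeal_of_isField_localization_fiber (hfib Q hQ))

theorem length_localization_completion_eq_of_isGRing (A : Type u) [CommRing A]
    [IsLocalRing A] [IsNoetherianRing A] (hG : IsGRing A)
    (p : Ideal A) [p.IsPrime] (hp : p ∈ minimalPrimes A)
    (q : Ideal (AdicCompletion (IsLocalRing.maximalIdeal A) A)) [q.IsPrime]
    (hq : q ∈ minimalPrimes (AdicCompletion (IsLocalRing.maximalIdeal A) A))
    (hpq : q.comap (algebraMap A (AdicCompletion (IsLocalRing.maximalIdeal A) A)) = p) :
    ringLength (Localization.AtPrime q) = ringLength (Localization.AtPrime p) := by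
  have : q.LiesOver p := ⟨hpq.symm⟩
  have := hG.isRegularRing_fiber p
  exact length_localization_completion_eq_of_isGRing_general p
    (fun _ _ ↦ isField_localization_of_isRegularRing_of_mem_minimalPrimes) q hq
end
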